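/- Let C be any conformal cycle of the Heawood graph H14. Then there exists a conformal cross over C in H14. -/

import Mathlib

namespace Paper

open SimpleGraph

variable {V : Type*} {W : Type*}

/-- `M` is a perfect matching of the vertex set `S` in the graph `G`:
a set of pairwise disjoint edges of `G`, all within `S`, covering every vertex of `S`. -/
def IsPMOn (G : SimpleGraph V) (S : Set V) (M : Set (Sym2 V)) : Prop :=
  (∀ e ∈ M, e ∈ G.edgeSet) ∧ (∀ e ∈ M, ∀ v ∈ e, v ∈ S) ∧
    ∀ v ∈ S, ∃! e, e ∈ M ∧ v ∈ e

/-- `M` is a perfect matching of `G`. -/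
def IsPM (G : SimpleGraph V) (M : Set (Sym2 V)) : Prop :=
  IsPMOn G Set.univ M

/-- The edges in `F` are pairwise vertex-disjoint. -/
def PairwiseDisjointEdges (F : Set (Sym2 V)) : Prop :=
  ∀ e ∈ F, ∀ f ∈ F, e ≠ f → ∀ x : V, x ∈ e → x ∉ f

/-- All edges of `G` have both endpoints in `S`. -/
def EdgesWithin (G : SimpleGraph V) (S : Set V) : Prop :=
  ∀ ⦃x y : V⦄, G.Adj x y → x ∈ S ∧ y ∈ S

def ConnectedOn (G : SimpleGraph V) (S : Set V) : Prop :=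
  S.Nonempty ∧ ∀ x ∈ S, ∀ y ∈ S, G.Reachable x y

/-- The graph `G` with vertex set `S` is a brace: it is connected and every matching of
size at most two extends to a perfect matching. -/
def IsBraceOn (G : SimpleGraph V) (S : Set V) : Prop :=
  EdgesWithin G S ∧ ConnectedOn G S ∧
    ∀ F : Set (Sym2 V), F ⊆ G.edgeSet → PairwiseDisjointEdges F → F.ncard ≤ 2 →
      ∃ M, IsPMOn G S M ∧ F ⊆ M

def IsBrace (G : SimpleGraph V) : Prop :=
  IsBraceOn G Set.univ

def IsBipartitionOf (G : SimpleGraph V) (V1 V2 : Set V) : Prop :=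
  Disjoint V1 V2 ∧ V1 ∪ V2 = Set.univ ∧ ∀ ⦃x y : V⦄, G.Adj x y → (x ∈ V1 ↔ y ∈ V2)

def IsBipartite (G : SimpleGraph V) : Prop :=
  ∃ V1 V2 : Set V, IsBipartitionOf G V1 V2

def MatchingCoveredOn (G : SimpleGraph V) (S : Set V) : Prop :=
  EdgesWithin G S ∧ ConnectedOn G S ∧ ∀ e ∈ G.edgeSet, ∃ M, IsPMOn G S M ∧ e ∈ M

def MatchingCovered (G : SimpleGraph V) : Prop :=
  MatchingCoveredOn G Set.univ

/-- Every vertex of `A` is covered exactly once by an edge of `M ∩ Es`;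
i.e. `M ∩ Es` is a perfect matching of the subgraph with vertex set `A` and edge set `Es`. -/
def MatchesExactly (M Es : Set (Sym2 V)) (A : Set V) : Prop :=
  ∀ v ∈ A, ∃! e, e ∈ M ∧ e ∈ Es ∧ v ∈ e

/-- `M` restricted to the edges of `P` with both endpoints in `A` is a
perfect matching of `A`; i.e. `M ∩ E(P ∩ A)` is a perfect matching of `P ∩ A`. -/
def WalkMConfOn (G : SimpleGraph V) (M : Set (Sym2 V)) {u v : V} (P : G.Walk u v)
    (A : Set V) : Prop :=
  ∀ x ∈ A, ∃! e : Sym2 V, e ∈ M ∧ e ∈ P.edges ∧ (∀ y ∈ e, y ∈ A) ∧ x ∈ e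

/-- The path `P` is `M`-conformal: `M ∩ E(P)` is a perfect matching of `P`. -/
def MConformalWalk (G : SimpleGraph V) (M : Set (Sym2 V)) {u v : V} (P : G.Walk u v) : Prop :=
  WalkMConfOn G M P {x | x ∈ P.support}

/-- The path `P` is internally `M`-conformal: removing both endpoints leaves
an `M`-conformal path. -/
def InternallyMConformal (G : SimpleGraph V) (M : Set (Sym2 V)) {u v : V}
    (P : G.Walk u v) : Prop :=
  WalkMConfOn G M P {x | x ∈ P.support ∧ x ≠ u ∧ x ≠ v}

/-- The path `P` is `M`-alternating: there is a set `S` of endpoints of `P`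
such that `P − S` is `M`-conformal. -/
def MAlternating (G : SimpleGraph V) (M : Set (Sym2 V)) {u v : V} (P : G.Walk u v) : Prop :=
  ∃ S ⊆ ({u, v} : Set V), WalkMConfOn G M P {x | x ∈ P.support ∧ x ∉ S}

/-- The cycle `C` is `M`-conformal: `M ∩ E(C)` is a perfect matching of `C`. -/
def MConformalCycle (G : SimpleGraph V) (M : Set (Sym2 V)) {c : V} (C : G.Walk c c) : Prop :=
  ∀ x ∈ C.support, ∃! e, e ∈ M ∧ e ∈ C.edges ∧ x ∈ e

/-- The cycle `C` is conformal in the graph `G` with vertex set `S`: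
`G − V(C)` has a perfect matching. -/
def ConformalCycleOn (G : SimpleGraph V) (S : Set V) {c : V} (C : G.Walk c c) : Prop :=
  ∃ M, IsPMOn G (S \ {x | x ∈ C.support}) M

def ConformalCycle (G : SimpleGraph V) {c : V} (C : G.Walk c c) : Prop :=
  ConformalCycleOn G Set.univ C

/-- The four vertices appear on the cycle `C` in the listed cyclic order. -/
def InCyclicOrder (G : SimpleGraph V) {c : V} (C : G.Walk c c) (s1 s2 t1 t2 : V) : Prop :=
  ∃ n : ℕ, List.Sublist [s1, s2, t1, t2] (C.support.tail.rotate n) ∨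
    List.Sublist [s1, s2, t1, t2] (C.support.tail.reverse.rotate n)

/-- The paths `P1` (from `s1` to `t1`) and `P2` (from `s2` to `t2`) form a matching
cross over the cycle `C` with respect to the perfect matching `M` of `(G, S)`. -/
def IsMatchingCrossOn (G : SimpleGraph V) (S : Set V) {c s1 t1 s2 t2 : V}
    (C : G.Walk c c) (M : Set (Sym2 V)) (P1 : G.Walk s1 t1) (P2 : G.Walk s2 t2) : Prop :=
  IsPMOn G S M ∧ [s1, s2, t1, t2].Nodup ∧ InCyclicOrder G C s1 s2 t1 t2 ∧
    P1.IsPath ∧ P2.IsPath ∧ MAlternating G M P1 ∧ MAlternating G M P2 ∧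
    (∀ x : V, x ∈ P1.support → x ∉ P2.support) ∧
    (∀ x ∈ P1.support, x ≠ s1 → x ≠ t1 → x ∉ C.support) ∧
    (∀ x ∈ P2.support, x ≠ s2 → x ≠ t2 → x ∉ C.support)

def HasMatchingCrossOn (G : SimpleGraph V) (S : Set V) {c : V} (C : G.Walk c c) : Prop :=
  ∃ (M : Set (Sym2 V)) (s1 t1 s2 t2 : V) (P1 : G.Walk s1 t1) (P2 : G.Walk s2 t2),
    IsMatchingCrossOn G S C M P1 P2

def HasMatchingCross (G : SimpleGraph V) {c : V} (C : G.Walk c c) : Prop :=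
  HasMatchingCrossOn G Set.univ C

/-- `C + P1 + P2` is a conformal subgraph of `(G, S)`. -/
def CrossConformalOn (G : SimpleGraph V) (S : Set V) {c s1 t1 s2 t2 : V}
    (C : G.Walk c c) (P1 : G.Walk s1 t1) (P2 : G.Walk s2 t2) : Prop :=
  ∃ N, IsPMOn G S N ∧
    MatchesExactly N
      ({f | f ∈ C.edges} ∪ {f | f ∈ P1.edges} ∪ {f | f ∈ P2.edges})
      ({x | x ∈ C.support} ∪ {x | x ∈ P1.support} ∪ {x | x ∈ P2.support})

/-- There is a conformal cross over the cycle `C` in `G`. -/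
def HasConformalCross (G : SimpleGraph V) {c : V} (C : G.Walk c c) : Prop :=
  ∃ (M : Set (Sym2 V)) (s1 t1 s2 t2 : V) (P1 : G.Walk s1 t1) (P2 : G.Walk s2 t2),
    IsMatchingCrossOn G Set.univ C M P1 P2 ∧ CrossConformalOn G Set.univ C P1 P2

/-- A bisubdivision of the graph `H` inside the graph `G`: every edge of `H` is replaced
by a path of odd length (i.e., subdivided an even number of times), and those paths
pairwise meet only in branch vertices. -/
structure Bisubdivision (H : SimpleGraph W) (G : SimpleGraph V) where
  bv : W → V
  bv_inj : Function.Injective bv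
  link : ∀ ⦃x y : W⦄, H.Adj x y → G.Walk (bv x) (bv y)
  link_isPath : ∀ ⦃x y : W⦄ (h : H.Adj x y), (link h).IsPath
  link_odd : ∀ ⦃x y : W⦄ (h : H.Adj x y), Odd (link h).length
  link_symm : ∀ ⦃x y : W⦄ (h : H.Adj x y), link h.symm = (link h).reverse
  link_branch : ∀ ⦃x y : W⦄ (h : H.Adj x y) (z : W), bv z ∈ (link h).support → z = x ∨ z = y
  link_meet : ∀ ⦃x y x' y' : W⦄ (h : H.Adj x y) (h' : H.Adj x' y'), s(x, y) ≠ s(x', y') →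
    ∀ v : V, v ∈ (link h).support → v ∈ (link h').support →
      (v = bv x ∨ v = bv y) ∧ (v = bv x' ∨ v = bv y')

def Bisubdivision.verts {H : SimpleGraph W} {G : SimpleGraph V}
    (L : Bisubdivision H G) : Set V :=
  {v | ∃ (x y : W) (h : H.Adj x y), v ∈ (L.link h).support}

def Bisubdivision.edgeSet {H : SimpleGraph W} {G : SimpleGraph V}
    (L : Bisubdivision H G) : Set (Sym2 V) :=
  {e | ∃ (x y : W) (h : H.Adj x y), e ∈ (L.link h).edges}

/-- The bisubdivision `L` is an `M`-conformal subgraph of `G`. -/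
def Bisubdivision.MConformal {H : SimpleGraph W} {G : SimpleGraph V}
    (L : Bisubdivision H G) (M : Set (Sym2 V)) : Prop :=
  MatchesExactly M L.edgeSet L.verts

/-- The bisubdivision `L` is a conformal subgraph of `(G, S)`. -/
def Bisubdivision.ConformalOn {H : SimpleGraph W} {G : SimpleGraph V}
    (L : Bisubdivision H G) (S : Set V) : Prop :=
  ∃ M, IsPMOn G S M ∧ L.MConformal M

abbrev K33 : SimpleGraph (Fin 3 ⊕ Fin 3) := completeBipartiteGraph (Fin 3) (Fin 3)

/-- `G` contains a conformal bisubdivision of `K_{3,3}`. -/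
def ContainsK33 (G : SimpleGraph V) : Prop :=
  ∃ L : Bisubdivision K33 G, L.ConformalOn Set.univ

def K33Free (G : SimpleGraph V) : Prop :=
  ¬ ContainsK33 G

def C4verts (a1 b1 a2 b2 : V) : Set V := {a1, b1, a2, b2}

def C4edges (a1 b1 a2 b2 : V) : Set (Sym2 V) := {s(a1, b1), s(b1, a2), s(a2, b2), s(b2, a1)}

/-- `a1 b1 a2 b2` is a cycle of length four in `G`. -/
def IsC4In (G : SimpleGraph V) (a1 b1 a2 b2 : V) : Prop :=
  [a1, b1, a2, b2].Nodup ∧ G.Adj a1 b1 ∧ G.Adj b1 a2 ∧ G.Adj a2 b2 ∧ G.Adj b2 a1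

/-- `B` is a 4-cycle sum of the graphs `Bi i` (with vertex sets `Si i`)
at the common conformal 4-cycle `a1 b1 a2 b2`. -/
def IsFourCycleSum {ℓ : ℕ} (B : SimpleGraph V) (Bi : Fin ℓ → SimpleGraph V)
    (Si : Fin ℓ → Set V) (a1 b1 a2 b2 : V) : Prop :=
  (∀ i, EdgesWithin (Bi i) (Si i)) ∧
  (∀ i, IsC4In (Bi i) a1 b1 a2 b2) ∧
  (∀ i, ∃ M, IsPMOn (Bi i) (Si i \ C4verts a1 b1 a2 b2) M) ∧
  (∀ i j, i ≠ j → Si i ∩ Si j = C4verts a1 b1 a2 b2) ∧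
  (⋃ i, Si i) = Set.univ ∧
  ∃ D ⊆ C4edges a1 b1 a2 b2, B.edgeSet = (⋃ i, (Bi i).edgeSet) \ D

/-- `B` is a maximal 4-cycle sum of the braces `Bi i` at the 4-cycle `a1 b1 a2 b2`. -/
def IsMaxFourCycleSumOfBraces {ℓ : ℕ} (B : SimpleGraph V) (Bi : Fin ℓ → SimpleGraph V)
    (Si : Fin ℓ → Set V) (a1 b1 a2 b2 : V) : Prop :=
  IsFourCycleSum B Bi Si a1 b1 a2 b2 ∧ (∀ i, IsBraceOn (Bi i) (Si i)) ∧
    ¬ ∃ ℓ' : ℕ, ℓ < ℓ' ∧ ∃ (Hi : Fin ℓ' → SimpleGraph V) (Ti : Fin ℓ' → Set V),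
      IsFourCycleSum B Hi Ti a1 b1 a2 b2 ∧ ∀ i, IsBraceOn (Hi i) (Ti i)

/-- `∂(X)`: the set of edges of `G` with exactly one endpoint in `X`. -/
def edgeCut (G : SimpleGraph V) (X : Set V) : Set (Sym2 V) :=
  {e | e ∈ G.edgeSet ∧ ∃ x y : V, e = s(x, y) ∧ x ∈ X ∧ y ∉ X}

/-- `∂(X)` is a tight cut of the graph `G` with vertex set `S`. -/
def IsTightCutOn (G : SimpleGraph V) (S X : Set V) : Prop :=
  ∀ M, IsPMOn G S M → (edgeCut G X ∩ M).ncard = 1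

def IsTightCut (G : SimpleGraph V) (X : Set V) : Prop :=
  IsTightCutOn G Set.univ X

/-- The minority of `X` with respect to the colour classes `V1`, `V2`. -/
noncomputable def minority (V1 V2 X : Set V) : Set V :=
  if (X ∩ V1).ncard < (X ∩ V2).ncard then X ∩ V1 else X ∩ V2

/-- `P1` and `P2` are `M`-alternating paths of the same type. -/
def SameType (G : SimpleGraph V) (M : Set (Sym2 V)) {s1 t1 s2 t2 : V}
    (P1 : G.Walk s1 t1) (P2 : G.Walk s2 t2) : Prop :=
  (InternallyMConformal G M P1 ∧ InternallyMConformal G M P2) ∨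
  (MConformalWalk G M P1 ∧ MConformalWalk G M P2) ∨
  ((¬ InternallyMConformal G M P1 ∧ ¬ MConformalWalk G M P1) ∧
    (¬ InternallyMConformal G M P2 ∧ ¬ MConformalWalk G M P2))

/-- There is a strong matching cross over `C` in `(G, S)` w.r.t. colour classes `V1, V2`. -/
def HasStrongMatchingCrossOn (G : SimpleGraph V) (S V1 V2 : Set V) {c : V}
    (C : G.Walk c c) : Prop :=
  ∃ (M : Set (Sym2 V)) (s1 t1 s2 t2 : V) (P1 : G.Walk s1 t1) (P2 : G.Walk s2 t2),
    IsMatchingCrossOn G S C M P1 P2 ∧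
    (V1 ∩ {s1, s2, t1, t2}).ncard = (V2 ∩ {s1, s2, t1, t2}).ncard ∧
    SameType G M P1 P2

/-- `s1 s2 t1 t2` appear in this cyclic order on the 4-cycle `a1 b1 a2 b2`. -/
def CyclicOrderC4 (a1 b1 a2 b2 s1 s2 t1 t2 : V) : Prop :=
  ∃ n : ℕ, [s1, s2, t1, t2] = [a1, b1, a2, b2].rotate n ∨
    [s1, s2, t1, t2] = [b2, a2, b1, a1].rotate n

/-- `P1, P2` form a matching cross over the 4-cycle `a1 b1 a2 b2` w.r.t. `M`. -/
def IsCrossOverC4 (G : SimpleGraph V) (M : Set (Sym2 V)) (a1 b1 a2 b2 : V)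
    {s1 t1 s2 t2 : V} (P1 : G.Walk s1 t1) (P2 : G.Walk s2 t2) : Prop :=
  [s1, s2, t1, t2].Nodup ∧ CyclicOrderC4 a1 b1 a2 b2 s1 s2 t1 t2 ∧
    P1.IsPath ∧ P2.IsPath ∧ MAlternating G M P1 ∧ MAlternating G M P2 ∧
    (∀ z : V, z ∈ P1.support → z ∉ P2.support) ∧
    (∀ z ∈ P1.support, z ≠ s1 → z ≠ t1 → z ∉ C4verts a1 b1 a2 b2) ∧
    (∀ z ∈ P2.support, z ≠ s2 → z ≠ t2 → z ∉ C4verts a1 b1 a2 b2)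

/-- The Heawood graph on `ZMod 14`. -/
def heawood : SimpleGraph (ZMod 14) :=
  SimpleGraph.fromRel fun i j => j = i + 1 ∨ (Even i.val ∧ j = i + 5)

/-- The Rotunda: three cubes glued along a common 4-cycle whose edges are then deleted. -/
def rotunda : SimpleGraph (Fin 4 ⊕ Fin 3 × Fin 4) :=
  SimpleGraph.fromRel fun x y =>
    match x, y with
    | Sum.inl j, Sum.inr p => j = p.2
    | Sum.inr p, Sum.inr q => p.1 = q.1 ∧ q.2 = p.2 + 1
    | _, _ => False

/-- `F` is an `S`-cover in `G`. -/
def IsSCover (G : SimpleGraph V) (S : Set V) (F : Set (Sym2 V)) : Prop :=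
  F ⊆ G.edgeSet ∧ (∀ e ∈ F, ∃ v ∈ S, v ∈ e) ∧ ∀ v ∈ S, ∃ e ∈ F, v ∈ e

/-- `F` is contained in some perfect matching of `G`. -/
def Extendible (G : SimpleGraph V) (F : Set (Sym2 V)) : Prop :=
  ∃ M, IsPM G M ∧ F ⊆ M

/-- `(G, S)` is an `F`-instance of 2-MLP for `(a1, a2)` and `(b1, b2)`. -/
def TwoMLPInstanceOn (G : SimpleGraph V) (S : Set V) (a1 a2 b1 b2 : V)
    (F : Set (Sym2 V)) : Prop :=
  ∃ M, IsPMOn G S M ∧ F ⊆ M ∧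
    ∃ (P1 : G.Walk a1 b1) (P2 : G.Walk a2 b2), P1.IsPath ∧ P2.IsPath ∧
      InternallyMConformal G M P1 ∧ InternallyMConformal G M P2 ∧
      ∀ x : V, x ∈ P1.support → x ∉ P2.support

/-- `B − u − v + pq`: delete the vertices `u, v` and add the edge `pq`. -/
def deleteAdd (B : SimpleGraph V) (u v p q : V) : SimpleGraph V :=
  SimpleGraph.fromRel fun x y =>
    (B.Adj x y ∨ (x = p ∧ y = q)) ∧ x ≠ u ∧ x ≠ v ∧ y ≠ u ∧ y ≠ v

/-- `B` plus two new vertices `x = Sum.inr 0` and `y = Sum.inr 1` together with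
the edges `xy, x b1, x b2, y a1, y a2`. -/
def plusXY (B : SimpleGraph V) (a1 a2 b1 b2 : V) : SimpleGraph (V ⊕ Fin 2) :=
  SimpleGraph.fromRel fun p q =>
    (∃ a b : V, p = Sum.inl a ∧ q = Sum.inl b ∧ B.Adj a b) ∨
    (p = Sum.inr 0 ∧ q = Sum.inr 1) ∨
    (p = Sum.inr 0 ∧ (q = Sum.inl b1 ∨ q = Sum.inl b2)) ∨
    (p = Sum.inr 1 ∧ (q = Sum.inl a1 ∨ q = Sum.inl a2))

/-- The endpoints `q1, q2` (on the 4-cycle) belong to the same colour class. -/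
def PrecrossDaring (V1 V2 : Set V) (q1 q2 : V) : Prop :=
  (q1 ∈ V1 ∧ q2 ∈ V1) ∨ (q1 ∈ V2 ∧ q2 ∈ V2)

/-- `(P1, P2, Q, M)` is a diffuse `C'`-`M`-precross through the 4-cycle `a1 b1 a2 b2`
in the graph `G` with vertex set `S` and colour classes `V1, V2`. -/
def DiffusePrecross (G : SimpleGraph V) (S V1 V2 : Set V) (a1 b1 a2 b2 : V)
    {c p1 q1 p2 q2 x1 x2 : V} (C' : G.Walk c c) (M : Set (Sym2 V))
    (P1 : G.Walk p1 q1) (P2 : G.Walk p2 q2) (Q : G.Walk x1 x2) : Prop :=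
  IsPMOn G S M ∧ P1.IsPath ∧ P2.IsPath ∧ Q.IsPath ∧
  MAlternating G M P1 ∧ MAlternating G M P2 ∧ MAlternating G M Q ∧
  (∀ z : V, z ∈ P1.support → z ∉ P2.support) ∧
  (∀ z : V, z ∈ P1.support → z ∉ Q.support) ∧
  (∀ z : V, z ∈ P2.support → z ∉ Q.support) ∧
  (∀ z ∈ P1.support, z ≠ p1 → z ≠ q1 → z ∉ C'.support) ∧
  (∀ z ∈ P2.support, z ≠ p2 → z ≠ q2 → z ∉ C'.support) ∧
  (∀ z ∈ Q.support, z ≠ x1 → z ≠ x2 → z ∉ C'.support) ∧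
  x1 ∈ C'.support ∧ x2 ∈ C'.support ∧
  p1 ∈ C'.support ∧ q1 ∈ C4verts a1 b1 a2 b2 ∧
  p2 ∈ C'.support ∧ q2 ∈ C4verts a1 b1 a2 b2 ∧
  (∀ Wk : G.Walk p1 p2, (∀ e ∈ Wk.edges, e ∈ C'.edges) → ∃ z ∈ Wk.support, z ∈ Q.support) ∧
  (∀ U ∈ ({V1, V2} : Set (Set V)), (q1 ∈ U ∨ q2 ∈ U) →
    ∃ q : V, (q = q1 ∨ q = q2) ∧ q ∈ U ∧ ∃ e ∈ M, e ∈ C4edges a1 b1 a2 b2 ∧ q ∈ e)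

/-- A daring diffuse precross is successful. -/
def PrecrossSuccessful (G : SimpleGraph V) (V1 V2 : Set V) (M : Set (Sym2 V))
    {p1 q1 p2 q2 : V} (P1 : G.Walk p1 q1) (P2 : G.Walk p2 q2) : Prop :=
  PrecrossDaring V1 V2 q1 q2 ∧
  ((InternallyMConformal G M P1 ∧ MConformalWalk G M P2) ∨
   (InternallyMConformal G M P2 ∧ MConformalWalk G M P1) ∨
   (Even P1.length ∧ Even P2.length ∧
     ((∃ e ∈ M, e ∈ P1.edges ∧ p1 ∈ e) ↔ ¬ ∃ e ∈ M, e ∈ P2.edges ∧ p2 ∈ e)))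

/-!
The automorphism group of the Heawood graph acts transitively on the `4`-arcs: the dihedral
symmetries of the rim act transitively on the vertices, a symmetry of order three rotates the
neighbours of `0`, and the elations of the Fano plane then move the remaining vertices of an arc
one at a time. A cycle may therefore be assumed to start with `0, 1, 2, 3, 4`. Only thirteen
cycles do. For five of them, of length `8` and `12`, two vertices off the cycle have at most one
neighbour off the cycle between them, so the cycle is not conformal. Those of length `10` and `14`
have two crossing chords, and the hexagon is crossed by two paths of length three.
-/

section Involution

variable {f : V → V}

/-- The edges `s(v, f v)`. When `f` is an involution moving every vertex to a neighbour this is a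
perfect matching, in which `f v` is the partner of `v`. -/
def partnerEdges (f : V → V) : Set (Sym2 V) := Set.range fun v => s(v, f v)

theorem eq_of_mem_partnerEdges (hf : Function.Involutive f) {e : Sym2 V}
    (he : e ∈ partnerEdges f) {v : V} (hv : v ∈ e) : e = s(v, f v) := by
  obtain ⟨w, rfl⟩ := he
  rcases Sym2.mem_iff.1 hv with rfl | rfl
  · rfl
  · rw [hf, Sym2.eq_swap]

theorem isPM_partnerEdges {G : SimpleGraph V} (hf : Function.Involutive f)
    (hadj : ∀ v, G.Adj v (f v)) : IsPM G (partnerEdges f) := by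
  refine ⟨?_, fun _ _ _ _ => Set.mem_univ _, fun v _ => ⟨s(v, f v), ⟨⟨v, rfl⟩, by simp⟩,
    fun e he => eq_of_mem_partnerEdges hf he.1 he.2⟩⟩
  rintro _ ⟨v, rfl⟩
  exact hadj v

end Involution

section Criteria

variable {G : SimpleGraph V} {c s t s₁ s₂ t₁ t₂ : V} {C : G.Walk c c} {f : V → V}

theorem InCyclicOrder.mem_support (h : InCyclicOrder G C s₁ s₂ t₁ t₂) {x : V}
    (hx : x ∈ [s₁, s₂, t₁, t₂]) : x ∈ C.support := by
  obtain ⟨n, hn | hn⟩ := h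
  · exact List.mem_of_mem_tail (List.mem_rotate.1 (hn.subset hx))
  · exact List.mem_of_mem_tail (List.mem_reverse.1 (List.mem_rotate.1 (hn.subset hx)))

theorem partner_mem_edges_of_support_eq {l : List V} (h : C.support = l)
    (hl : ∀ v ∈ l, s(v, f v) ∈ List.zipWith (s(·, ·)) l l.tail) :
    ∀ v ∈ C.support, s(v, f v) ∈ C.edges := by
  subst h
  rwa [Walk.edges_eq_zipWith_support]

/-- The internal vertices of the path `P` lie off the cycle `C`, and their partners under `f`
are their neighbours along `P`. -/
def IsPartneredOff (f : V → V) (C : G.Walk c c) (P : G.Walk s t) : Prop :=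
  ∀ x ∈ P.support, x ≠ s → x ≠ t → x ∉ C.support ∧ s(x, f x) ∈ P.edges

theorem IsPartneredOff.mAlternating {P : G.Walk s t} (hP : IsPartneredOff f C P)
    (hf : Function.Involutive f) (hC : ∀ v ∈ C.support, s(v, f v) ∈ C.edges)
    (hs : s ∈ C.support) (ht : t ∈ C.support) : MAlternating G (partnerEdges f) P := by
  refine ⟨{s, t}, subset_rfl, ?_⟩
  rintro x ⟨hx, hxst⟩
  simp only [Set.mem_insert_iff, Set.mem_singleton_iff, not_or] at hxst
  obtain ⟨hxC, hxP⟩ := hP x hx hxst.1 hxst.2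
  have hfxC : f x ∉ C.support := fun h =>
    hxC (by simpa only [hf x] using C.snd_mem_support_of_mem_edges (hC _ h))
  refine ⟨s(x, f x), ⟨⟨x, rfl⟩, hxP, ?_, by simp⟩,
    fun e he => eq_of_mem_partnerEdges hf he.1 he.2.2.2⟩
  intro y hy
  rcases Sym2.mem_iff.1 hy with rfl | rfl
  · exact ⟨hx, by simpa using hxst⟩
  · refine ⟨P.snd_mem_support_of_mem_edges hxP, ?_⟩
    rintro (h | h)
    · exact hfxC (h ▸ hs)
    · exact hfxC (h ▸ ht)

theorem hasConformalCross_of_isPartneredOff (hf : Function.Involutive f)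
    (hadj : ∀ v, G.Adj v (f v)) (hC : ∀ v ∈ C.support, s(v, f v) ∈ C.edges)
    (hnodup : [s₁, s₂, t₁, t₂].Nodup) (hord : InCyclicOrder G C s₁ s₂ t₁ t₂)
    {P₁ : G.Walk s₁ t₁} {P₂ : G.Walk s₂ t₂} (hP₁ : P₁.IsPath) (hP₂ : P₂.IsPath)
    (hdisj : ∀ x ∈ P₁.support, x ∉ P₂.support)
    (hoff₁ : IsPartneredOff f C P₁) (hoff₂ : IsPartneredOff f C P₂) :
    HasConformalCross G C := by
  have hs₁ : s₁ ∈ C.support := hord.mem_support (by simp)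
  have hs₂ : s₂ ∈ C.support := hord.mem_support (by simp)
  have ht₁ : t₁ ∈ C.support := hord.mem_support (by simp)
  have ht₂ : t₂ ∈ C.support := hord.mem_support (by simp)
  have hM : IsPM G (partnerEdges f) := isPM_partnerEdges hf hadj
  refine ⟨_, s₁, t₁, s₂, t₂, P₁, P₂, ⟨hM, hnodup, hord, hP₁, hP₂,
    hoff₁.mAlternating hf hC hs₁ ht₁, hoff₂.mAlternating hf hC hs₂ ht₂, hdisj,
    fun x hx hs ht => (hoff₁ x hx hs ht).1, fun x hx hs ht => (hoff₂ x hx hs ht).1⟩, _, hM, ?_⟩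
  intro v hv
  refine ⟨s(v, f v), ⟨⟨v, rfl⟩, ?_, by simp⟩, fun e he => eq_of_mem_partnerEdges hf he.1 he.2.2⟩
  by_cases hvC : v ∈ C.support
  · exact Or.inl (Or.inl (hC v hvC))
  have hne : ∀ {u}, u ∈ C.support → v ≠ u := fun hu h => hvC (h ▸ hu)
  rcases hv with (hv | hv) | hv
  · exact absurd hv hvC
  · exact Or.inl (Or.inr (hoff₁ v hv (hne hs₁) (hne ht₁)).2)
  · exact Or.inr (hoff₂ v hv (hne hs₂) (hne ht₂)).2

theorem hasConformalCross_of_chords (hf : Function.Involutive f)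
    (hadj : ∀ v, G.Adj v (f v)) (hC : ∀ v ∈ C.support, s(v, f v) ∈ C.edges)
    (hnodup : [s₁, s₂, t₁, t₂].Nodup) (hord : InCyclicOrder G C s₁ s₂ t₁ t₂)
    (h₁ : G.Adj s₁ t₁) (h₂ : G.Adj s₂ t₂) : HasConformalCross G C := by
  have hoff : ∀ {s t} (h : G.Adj s t), IsPartneredOff f C h.toWalk := by
    intro s t h x hx hs ht
    simp [hs, ht] at hx
  refine hasConformalCross_of_isPartneredOff hf hadj hC hnodup hord
    (P₁ := h₁.toWalk) (P₂ := h₂.toWalk) (by simp [h₁.ne]) (by simp [h₂.ne]) ?_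
    (hoff h₁) (hoff h₂)
  simp only [List.nodup_cons, List.mem_cons, List.not_mem_nil, or_false, not_or] at hnodup
  simp only [Adj.toWalk, Walk.support_cons, Walk.support_nil, List.mem_cons, List.not_mem_nil,
    or_false]
  grind

theorem inCyclicOrder_of_sublist (h : [s₁, s₂, t₁, t₂].Sublist C.support.tail) :
    InCyclicOrder G C s₁ s₂ t₁ t₂ :=
  ⟨0, Or.inl (by simpa only [List.rotate_zero] using h)⟩

theorem not_isPMOn_of_neighbors_subset_singleton {S : Set V} {M : Set (Sym2 V)} {u v z : V}
    (huS : u ∈ S) (hvS : v ∈ S) (huv : u ≠ v) (hu : ∀ w ∈ S, G.Adj u w → w = z)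
    (hv : ∀ w ∈ S, G.Adj v w → w = z) : ¬ IsPMOn G S M := by
  rintro ⟨hadj, hmem, huniq⟩
  have mem_of_forced : ∀ {x}, x ∈ S → (∀ w ∈ S, G.Adj x w → w = z) → s(x, z) ∈ M := by
    intro x hxS hx
    obtain ⟨e, ⟨heM, hxe⟩, -⟩ := huniq x hxS
    obtain ⟨w, rfl⟩ := Sym2.mem_iff_exists.1 hxe
    rwa [← hx w (hmem _ heM w (by simp)) (hadj _ heM)]
  have huz := mem_of_forced huS hu
  have hvz := mem_of_forced hvS hv
  have heq := (huniq z (hmem _ huz z (by simp))).unique ⟨huz, by simp⟩ ⟨hvz, by simp⟩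
  exact huv (Sym2.congr_left.1 heq)

end Criteria

section Iso

variable {G : SimpleGraph V} {H : SimpleGraph W}

theorem apply_mem_sym2Map {g : V → W} (hg : Function.Injective g) {v : V} {e : Sym2 V} :
    g v ∈ Sym2.map g e ↔ v ∈ e := by
  simp only [Sym2.mem_map, hg.eq_iff, exists_eq_right]

theorem forall_mem_sym2Map {g : V → W} {p : W → Prop} {e : Sym2 V} :
    (∀ y ∈ Sym2.map g e, p y) ↔ ∀ x ∈ e, p (g x) := by
  simp only [Sym2.mem_map, forall_exists_index, and_imp, forall_apply_eq_imp_iff₂]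

theorem sym2Map_symm_sym2Map (φ : G ≃g H) (e : Sym2 V) :
    Sym2.map φ.symm (Sym2.map φ e) = e := by
  simp [Sym2.map_map]

theorem existsUnique_sym2_iff (φ : G ≃g H) {p : Sym2 W → Prop} :
    (∃! e, p e) ↔ ∃! e, p (Sym2.map φ e) :=
  Function.Bijective.existsUnique_iff
    ⟨Sym2.map.injective φ.injective, fun e => ⟨_, sym2Map_symm_sym2Map φ.symm e⟩⟩

theorem mem_support_map_iso (φ : G ≃g H) {s t : V} (P : G.Walk s t) {x : W} :
    x ∈ (P.map φ.toHom).support ↔ φ.symm x ∈ P.support := by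
  obtain ⟨v, rfl⟩ := φ.surjective x
  simp [φ.injective.eq_iff]

theorem mem_edges_map_iso (φ : G ≃g H) {s t : V} (P : G.Walk s t) {e : Sym2 W} :
    e ∈ (P.map φ.toHom).edges ↔ Sym2.map φ.symm e ∈ P.edges := by
  rw [Walk.edges_map]
  refine ⟨fun h => ?_, fun h => ?_⟩
  · obtain ⟨e, he, rfl⟩ := List.mem_map.1 h
    rwa [← sym2Map_symm_sym2Map φ e] at he
  · exact List.mem_map.2 ⟨_, h, sym2Map_symm_sym2Map φ.symm e⟩

theorem IsPMOn.comap {S : Set W} {M : Set (Sym2 W)} (h : IsPMOn H S M) (φ : G ≃g H) :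
    IsPMOn G (φ ⁻¹' S) (Sym2.map φ ⁻¹' M) := by
  obtain ⟨hadj, hmem, huniq⟩ := h
  refine ⟨fun e he => φ.map_mem_edgeSet_iff.1 (hadj _ he),
    fun e he v hv => hmem _ he _ ((apply_mem_sym2Map φ.injective).2 hv), fun v hv => ?_⟩
  simpa only [existsUnique_sym2_iff φ, apply_mem_sym2Map φ.injective, Set.mem_preimage]
    using huniq (φ v) hv

theorem WalkMConfOn.comap {s t : W} {P : H.Walk s t} {A : Set W} {M : Set (Sym2 W)}
    (h : WalkMConfOn H M P A) (φ : G ≃g H) :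
    WalkMConfOn G (Sym2.map φ ⁻¹' M) (P.map φ.symm.toHom) (φ ⁻¹' A) := by
  intro x hx
  simpa only [existsUnique_sym2_iff φ, apply_mem_sym2Map φ.injective, forall_mem_sym2Map,
    Set.mem_preimage, mem_edges_map_iso, RelIso.symm_symm] using h (φ x) hx

theorem MatchesExactly.comap {M Es : Set (Sym2 W)} {A : Set W} (h : MatchesExactly M Es A)
    (φ : G ≃g H) : MatchesExactly (Sym2.map φ ⁻¹' M) (Sym2.map φ ⁻¹' Es) (φ ⁻¹' A) := by
  intro v hv
  simpa only [existsUnique_sym2_iff φ, apply_mem_sym2Map φ.injective, Set.mem_preimage]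
    using h (φ v) hv

theorem MAlternating.comap {s t : W} {P : H.Walk s t} {M : Set (Sym2 W)}
    (h : MAlternating H M P) (φ : G ≃g H) :
    MAlternating G (Sym2.map φ ⁻¹' M) (P.map φ.symm.toHom) := by
  obtain ⟨S, hS, hP⟩ := h
  refine ⟨φ ⁻¹' S, fun x hx => ?_, ?_⟩
  · simpa [RelIso.eq_symm_apply] using hS hx
  · convert hP.comap φ using 1
    ext x
    simp only [Set.mem_ofPred_eq, Set.mem_preimage, mem_support_map_iso, RelIso.symm_symm]

theorem InCyclicOrder.of_map {c : V} {C : G.Walk c c} {s₁ s₂ t₁ t₂ : W} (φ : G ≃g H)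
    (h : InCyclicOrder H (C.map φ.toHom) s₁ s₂ t₁ t₂) :
    InCyclicOrder G C (φ.symm s₁) (φ.symm s₂) (φ.symm t₁) (φ.symm t₂) := by
  obtain ⟨n, h⟩ := h
  refine ⟨n, h.imp (fun h => ?_) fun h => ?_⟩ <;>
  · simpa [← List.map_tail, ← List.map_rotate, ← List.map_reverse, Function.comp_def]
      using h.map φ.symm

theorem ConformalCycle.map {c : V} {C : G.Walk c c} (h : ConformalCycle G C) (φ : G ≃g H) :
    ConformalCycle H (C.map φ.toHom) := by
  obtain ⟨M, hM⟩ := h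
  refine ⟨Sym2.map φ.symm ⁻¹' M, ?_⟩
  convert hM.comap φ.symm using 1
  ext x
  simp only [Set.mem_sdiff, Set.mem_univ, true_and, Set.mem_preimage, Set.mem_ofPred_eq,
    mem_support_map_iso]

theorem HasConformalCross.of_map {c : V} {C : G.Walk c c} (φ : G ≃g H)
    (h : HasConformalCross H (C.map φ.toHom)) : HasConformalCross G C := by
  obtain ⟨M, s₁, t₁, s₂, t₂, P₁, P₂, ⟨hM, hnodup, hord, hP₁, hP₂, halt₁, halt₂, hdisj, hoff₁,
    hoff₂⟩, N, hN, hmatch⟩ := h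
  have hoff : ∀ {s t : W} {P : H.Walk s t},
      (∀ x ∈ P.support, x ≠ s → x ≠ t → x ∉ (C.map φ.toHom).support) →
      ∀ x ∈ (P.map φ.symm.toHom).support, x ≠ φ.symm s → x ≠ φ.symm t → x ∉ C.support := by
    intro s t P hP x hx hs ht hxC
    refine hP (φ x) ((mem_support_map_iso _ _).1 hx) ?_ ?_
      ((mem_support_map_iso _ _).2 (by simpa using hxC))
    · rwa [Ne, ← RelIso.eq_symm_apply]
    · rwa [Ne, ← RelIso.eq_symm_apply]
  refine ⟨_, _, _, _, _, P₁.map φ.symm.toHom, P₂.map φ.symm.toHom, ⟨hM.comap φ,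
    hnodup.map φ.symm.injective, hord.of_map φ, hP₁.map φ.symm.injective,
    hP₂.map φ.symm.injective, halt₁.comap φ, halt₂.comap φ, ?_, hoff hoff₁, hoff hoff₂⟩, _,
    hN.comap φ, ?_⟩
  · intro x hx hx'
    exact hdisj _ ((mem_support_map_iso _ _).1 hx) ((mem_support_map_iso _ _).1 hx')
  · convert hmatch.comap φ using 1
    · ext e
      simp only [Set.mem_ofPred_eq, Set.mem_preimage, Set.mem_union, mem_edges_map_iso,
        RelIso.symm_symm, sym2Map_symm_sym2Map]
    · ext x
      simp only [Set.mem_ofPred_eq, Set.mem_preimage, Set.mem_union, mem_support_map_iso,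
        RelIso.symm_symm, RelIso.symm_apply_apply]

end Iso

section Enumeration

variable {G : SimpleGraph V}

/-- The vertex lists of the paths from `v` to `t` of length at most `n` that avoid the vertices in
`avoid`, when `nbr` lists the neighbours of every vertex. -/
def simplePaths [DecidableEq V] (nbr : V → List V) (t : V) :
    (n : ℕ) → (avoid : List V) → (v : V) → List (List V)
  | 0, _, v => if v = t then [[v]] else []
  | n + 1, avoid, v =>
    if v = t then [[v]]
    else ((nbr v).filter (· ∉ avoid)).flatMap fun w =>
      (simplePaths nbr t n (v :: avoid) w).map (v :: ·)

theorem support_mem_simplePaths [DecidableEq V] {nbr : V → List V}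
    (hnbr : ∀ v w, G.Adj v w → w ∈ nbr v) {v t : V} {P : G.Walk v t} (hP : P.IsPath) {n : ℕ}
    (hn : P.length ≤ n) {avoid : List V} (havoid : ∀ x ∈ P.support, x ∉ avoid) :
    P.support ∈ simplePaths nbr t n avoid v := by
  induction P generalizing n avoid with
  | nil => cases n <;> simp [simplePaths]
  | @cons v w t h P ih =>
    obtain ⟨hP, hvP⟩ := (Walk.cons_isPath_iff h P).1 hP
    obtain ⟨n, rfl⟩ : ∃ k, n = k + 1 := ⟨n - 1, by simp only [Walk.length_cons] at hn; omega⟩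
    have hvt : v ≠ t := fun hvt => hvP (hvt ▸ P.end_mem_support)
    have hw : w ∉ avoid := havoid w (by simp)
    have hrest : P.support ∈ simplePaths nbr t n (v :: avoid) w :=
      ih hP (by simpa using hn) fun x hx => by
        simp only [List.mem_cons, not_or]
        exact ⟨fun hxv => hvP (hxv ▸ hx), havoid x (by simp [hx])⟩
    simp only [simplePaths, if_neg hvt, List.mem_flatMap, List.mem_filter, List.mem_map]
    exact ⟨w, ⟨hnbr v w h, by simpa using hw⟩, _, hrest, Walk.support_cons h P⟩

theorem take_support_append_support_drop {s t : V} (P : G.Walk s t) {n : ℕ} (hn : n ≤ P.length) :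
    P.support.take n ++ (P.drop n).support = P.support := by
  rw [Walk.drop_support_eq_support_drop_min, min_eq_left hn, List.take_append_drop]

theorem take_succ_support {s t : V} {P : G.Walk s t} {n : ℕ} (hn : n ≤ P.length) :
    P.support.take (n + 1) = (List.range (n + 1)).map P.getVert := by
  refine List.ext_getElem (by simp [hn]) fun i _ _ => ?_
  simp [Walk.support_getElem_eq_getVert]

theorem notMem_tail_take_of_mem_support_drop {c : V} {C : G.Walk c c} (hC : C.IsCycle) {n : ℕ}
    (hn : n ≤ C.length) {x : V} (hx : x ∈ (C.drop n).support) : x ∉ (C.support.take n).tail := by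
  obtain rfl | hpos := n.eq_zero_or_pos
  · simp
  have hnodup := hC.support_nodup
  rw [← take_support_append_support_drop C hn, List.tail_append_of_ne_nil (by simp [hpos.ne'])]
    at hnodup
  exact fun hx' => List.disjoint_of_nodup_append hnodup hx' hx

end Enumeration

section Heawood

instance : DecidableRel heawood.Adj := by
  unfold heawood
  infer_instance

/-- The neighbours of a vertex of the Heawood graph, for use with `simplePaths`. -/
def heawoodNeighbors (v : ZMod 14) : List (ZMod 14) :=
  [v + 1, v - 1, if Even v.val then v + 5 else v - 5]

theorem mem_heawoodNeighbors : ∀ v w, heawood.Adj v w → w ∈ heawoodNeighbors v := by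
  decide +kernel

variable {c : ZMod 14} {C : heawood.Walk c c}

theorem four_le_length_of_isCycle_heawood (hC : C.IsCycle) : 4 ≤ C.length := by
  have no_triangle : ∀ u v w, heawood.Adj u v → heawood.Adj v w → ¬ heawood.Adj w u := by
    decide +kernel
  by_contra! hlt
  have hlen : C.length = 3 := le_antisymm (by omega) hC.three_le_length
  have hadj : ∀ i < 3, heawood.Adj (C.getVert i) (C.getVert (i + 1)) := fun i hi =>
    C.adj_getVert_succ (hlen ▸ hi)
  refine no_triangle _ _ _ (hadj 0 (by simp)) (hadj 1 (by simp)) ?_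
  simpa [← hlen] using hadj 2 (by simp)

theorem exists_iso_apply_eq_zero (v : ZMod 14) : ∃ φ : heawood ≃g heawood, φ v = 0 := by
  by_cases hv : Even v.val
  · have hadj : ∀ {i j}, heawood.Adj (i - v) (j - v) ↔ heawood.Adj i j := by
      revert v; decide +kernel
    exact ⟨⟨Equiv.subRight v, hadj⟩, sub_self v⟩
  · have hadj : ∀ {i j}, heawood.Adj (v - i) (v - j) ↔ heawood.Adj i j := by
      revert v; decide +kernel
    exact ⟨⟨Equiv.subLeft v, hadj⟩, sub_self v⟩

/-- The automorphism of order three that fixes `0` and permutes its neighbours cyclically. -/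
def neighborRotation : heawood ≃g heawood where
  toFun i := if Even i.val then 9 * i else 9 * i - 4
  invFun i := if Even i.val then 11 * i else 11 * i + 2
  left_inv := by decide +kernel
  right_inv := by decide +kernel
  map_rel_iff' := by decide +kernel

/-- The elation of the Fano plane whose centre and axis are `0` and `5`. -/
def elationZeroFive : heawood ≃g heawood where
  toEquiv := .swap 2 10 * .swap 3 9 * .swap 7 11 * .swap 8 12
  map_rel_iff' := by decide +kernel

/-- The elation of the Fano plane whose centre and axis are `0` and `1`. -/
def elationZeroOne : heawood ≃g heawood where
  toEquiv := .swap 3 7 * .swap 4 6 * .swap 8 12 * .swap 9 11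
  map_rel_iff' := by decide +kernel

/-- The elation of the Fano plane whose centre and axis are `1` and `2`. -/
def elationOneTwo : heawood ≃g heawood where
  toEquiv := .swap 4 12 * .swap 5 13 * .swap 6 8 * .swap 9 11
  map_rel_iff' := by decide +kernel

theorem exists_iso_map_arc_from_zero : ∀ v₁, heawood.Adj 0 v₁ → ∀ v₂, heawood.Adj v₁ v₂ → 0 ≠ v₂ →
    ∀ v₃, heawood.Adj v₂ v₃ → v₁ ≠ v₃ → ∀ v₄, heawood.Adj v₃ v₄ → v₂ ≠ v₄ →
    ∃ (i j k : Fin 2) (l : Fin 3), [0, v₁, v₂, v₃, v₄].map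
      (elationOneTwo ^ i.val * elationZeroOne ^ j.val * elationZeroFive ^ k.val *
        neighborRotation ^ l.val) = [0, 1, 2, 3, 4] := by
  decide +kernel

theorem exists_iso_map_arc {v₀ v₁ v₂ v₃ v₄ : ZMod 14} (h₀₁ : heawood.Adj v₀ v₁)
    (h₁₂ : heawood.Adj v₁ v₂) (h₂₃ : heawood.Adj v₂ v₃) (h₃₄ : heawood.Adj v₃ v₄)
    (h₀₂ : v₀ ≠ v₂) (h₁₃ : v₁ ≠ v₃) (h₂₄ : v₂ ≠ v₄) :
    ∃ φ : heawood ≃g heawood, [v₀, v₁, v₂, v₃, v₄].map φ = [0, 1, 2, 3, 4] := by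
  obtain ⟨ψ, hψ⟩ := exists_iso_apply_eq_zero v₀
  obtain ⟨i, j, k, l, h⟩ := exists_iso_map_arc_from_zero (ψ v₁) (hψ ▸ ψ.map_adj_iff.2 h₀₁)
    (ψ v₂) (ψ.map_adj_iff.2 h₁₂) (hψ ▸ ψ.injective.ne h₀₂)
    (ψ v₃) (ψ.map_adj_iff.2 h₂₃) (ψ.injective.ne h₁₃)
    (ψ v₄) (ψ.map_adj_iff.2 h₃₄) (ψ.injective.ne h₂₄)
  refine ⟨ψ.trans (elationOneTwo ^ i.val * elationZeroOne ^ j.val * elationZeroFive ^ k.val *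
    neighborRotation ^ l.val), ?_⟩
  simpa [hψ] using h

theorem exists_iso_map_take_support (hC : C.IsCycle) :
    ∃ φ : heawood ≃g heawood, (C.support.take 5).map φ = [0, 1, 2, 3, 4] := by
  have hlen : 4 ≤ C.length := four_le_length_of_isCycle_heawood hC
  have hadj : ∀ i < 4, heawood.Adj (C.getVert i) (C.getVert (i + 1)) := fun i hi =>
    C.adj_getVert_succ (hi.trans_le hlen)
  have hne : ∀ i < 3, C.getVert i ≠ C.getVert (i + 2) := fun i hi => by
    simpa using hC.getVert_sub_one_ne_getVert_add_one (i := i + 1) (by omega)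
  rw [take_succ_support hlen]
  exact exists_iso_map_arc (hadj 0 (by simp)) (hadj 1 (by simp)) (hadj 2 (by simp))
    (hadj 3 (by simp)) (hne 0 (by simp)) (hne 1 (by simp)) (hne 2 (by simp))

/-- The supports of the cycles starting with `0, 1, 2, 3, 4` that turn out not to be conformal. -/
def nonconformalSupports : List (List (ZMod 14)) :=
  [[0, 1, 2, 3, 4, 9, 8, 13, 0],
    [0, 1, 2, 3, 4, 5, 6, 11, 10, 9, 8, 13, 0],
    [0, 1, 2, 3, 4, 9, 10, 11, 6, 7, 8, 13, 0],
    [0, 1, 2, 3, 4, 9, 8, 7, 6, 11, 12, 13, 0],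
    [0, 1, 2, 3, 4, 9, 8, 13, 12, 11, 6, 5, 0]]

/-- The supports of the conformal cycles starting with `0, 1, 2, 3, 4`, apart from the hexagon. -/
def chordCrossedSupports : List (List (ZMod 14)) :=
  [[0, 1, 2, 3, 4, 5, 6, 7, 8, 13, 0],
    [0, 1, 2, 3, 4, 5, 6, 11, 12, 13, 0],
    [0, 1, 2, 3, 4, 9, 10, 11, 12, 13, 0],
    [0, 1, 2, 3, 4, 9, 10, 11, 6, 5, 0],
    [0, 1, 2, 3, 4, 9, 8, 7, 6, 5, 0],
    [0, 1, 2, 3, 4, 5, 6, 7, 8, 9, 10, 11, 12, 13, 0],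
    [0, 1, 2, 3, 4, 9, 10, 11, 12, 13, 8, 7, 6, 5, 0]]

theorem support_cases_of_take_support (hC : C.IsCycle)
    (h : C.support.take 5 = [0, 1, 2, 3, 4]) :
    C.support ∈ nonconformalSupports ∨ C.support ∈ chordCrossedSupports ∨
      C.support = [0, 1, 2, 3, 4, 5, 0] := by
  have hlen : 4 ≤ C.length := four_le_length_of_isCycle_heawood hC
  have htake : C.support.take 4 = [0, 1, 2, 3] := by
    simpa [List.take_take] using congrArg (List.take 4) h
  rw [take_succ_support hlen] at h
  have hfour : C.getVert 4 = 4 := Option.some.inj (congrArg (·[4]?) h)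
  obtain rfl : c = 0 := C.getVert_zero.symm.trans (Option.some.inj (congrArg (·[0]?) h))
  have hP : (C.drop 4).IsPath := hC.isPath_drop (by simp)
  have hmem : (C.drop 4).support ∈ simplePaths heawoodNeighbors 0 13 [1, 2, 3] 4 := by
    rw [← hfour]
    refine support_mem_simplePaths mem_heawoodNeighbors hP (Nat.le_of_lt_succ hP.length_lt) ?_
    intro x hx
    simpa only [htake, List.tail_cons] using notMem_tail_take_of_mem_support_drop hC hlen hx
  have enumeration : ∀ l ∈ simplePaths heawoodNeighbors 0 13 [1, 2, 3] 4,
      [0, 1, 2, 3] ++ l ∈ nonconformalSupports ∨ [0, 1, 2, 3] ++ l ∈ chordCrossedSupports ∨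
        [0, 1, 2, 3] ++ l = [0, 1, 2, 3, 4, 5, 0] := by
    decide +kernel
  rw [← take_support_append_support_drop C hlen, htake]
  exact enumeration _ hmem

theorem not_conformalCycle_of_mem_nonconformalSupports (h : C.support ∈ nonconformalSupports) :
    ¬ ConformalCycle heawood C := by
  have hall : ∀ l ∈ nonconformalSupports, ∃ z u v : ZMod 14, u ∉ l ∧ v ∉ l ∧ u ≠ v ∧
      (∀ w ∉ l, heawood.Adj u w → w = z) ∧ ∀ w ∉ l, heawood.Adj v w → w = z := by
    decide +kernel
  obtain ⟨z, u, v, hu, hv, huv, hzu, hzv⟩ := hall _ h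
  rintro ⟨M, hM⟩
  have mem_compl : ∀ {w}, w ∉ C.support → w ∈ Set.univ \ {x | x ∈ C.support} := fun h =>
    ⟨trivial, h⟩
  exact not_isPMOn_of_neighbors_subset_singleton (mem_compl hu) (mem_compl hv) huv
    (fun w hw => hzu w hw.2) (fun w hw => hzv w hw.2) hM

/-- The partner of `v` in the perfect matching of the rim `0, 1, …, 13` that contains `1 2`. -/
def rimPartner (v : ZMod 14) : ZMod 14 := if Even v.val then v - 1 else v + 1

/-- The partners of `0, 1, …, 13` in a perfect matching whose only edge off the rim is `4 9`. -/
def oneChordPartner : ZMod 14 → ZMod 14 := ![1, 0, 3, 2, 9, 6, 5, 8, 7, 4, 11, 10, 13, 12]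

/-- The partners of `0, 1, …, 13` in a perfect matching whose edges off the rim are `0 5` and
`6 11`. -/
def twoChordPartner : ZMod 14 → ZMod 14 := ![5, 2, 1, 4, 3, 0, 11, 8, 7, 10, 9, 6, 13, 12]

theorem involutive_rimPartner : Function.Involutive rimPartner := by
  unfold Function.Involutive
  decide +kernel

theorem involutive_oneChordPartner : Function.Involutive oneChordPartner := by
  unfold Function.Involutive
  decide +kernel

theorem involutive_twoChordPartner : Function.Involutive twoChordPartner := by
  unfold Function.Involutive
  decide +kernel

theorem adj_rimPartner : ∀ v, heawood.Adj v (rimPartner v) := by decide +kernel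

theorem adj_oneChordPartner : ∀ v, heawood.Adj v (oneChordPartner v) := by decide +kernel

theorem adj_twoChordPartner : ∀ v, heawood.Adj v (twoChordPartner v) := by decide +kernel

theorem hasConformalCross_of_mem_chordCrossedSupports (h : C.support ∈ chordCrossedSupports) :
    HasConformalCross heawood C := by
  have of_partner : ∀ {f : ZMod 14 → ZMod 14}, Function.Involutive f →
      (∀ v, heawood.Adj v (f v)) → ∀ l : List (ZMod 14), C.support = l → ∀ s₁ s₂ t₁ t₂,
      ((∀ v ∈ l, s(v, f v) ∈ List.zipWith (s(·, ·)) l l.tail) ∧ [s₁, s₂, t₁, t₂].Nodup ∧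
        [s₁, s₂, t₁, t₂].Sublist l.tail ∧ heawood.Adj s₁ t₁ ∧ heawood.Adj s₂ t₂) →
      HasConformalCross heawood C := by
    rintro f hf hadj _ rfl s₁ s₂ t₁ t₂ ⟨hC, hnodup, hord, h₁, h₂⟩
    exact hasConformalCross_of_chords hf hadj (partner_mem_edges_of_support_eq rfl hC) hnodup
      (inCyclicOrder_of_sublist hord) h₁ h₂
  have rim := of_partner involutive_rimPartner adj_rimPartner
  have oneChord := of_partner involutive_oneChordPartner adj_oneChordPartner
  simp only [chordCrossedSupports, List.mem_cons, List.not_mem_nil, or_false] at h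
  rcases h with h | h | h | h | h | h | h
  · exact rim _ h 2 5 7 0 (by decide +kernel)
  · exact rim _ h 3 5 12 0 (by decide +kernel)
  · exact rim _ h 1 3 10 12 (by decide +kernel)
  · exact oneChord _ h 1 4 10 5 (by decide +kernel)
  · exact oneChord _ h 2 4 7 5 (by decide +kernel)
  · exact rim _ h 1 3 10 12 (by decide +kernel)
  · exact oneChord _ h 1 3 10 12 (by decide +kernel)

theorem hasConformalCross_of_support_eq_hexagon (h : C.support = [0, 1, 2, 3, 4, 5, 0]) :
    HasConformalCross heawood C := by
  let P₁ : heawood.Walk 1 4 := .cons (v := 10) (by decide) (.cons (v := 9) (by decide)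
    (.cons (by decide) .nil))
  let P₂ : heawood.Walk 3 0 := .cons (v := 12) (by decide) (.cons (v := 13) (by decide)
    (.cons (by decide) .nil))
  refine hasConformalCross_of_isPartneredOff involutive_twoChordPartner adj_twoChordPartner
    (partner_mem_edges_of_support_eq h (by decide +kernel)) (by decide)
    (inCyclicOrder_of_sublist (by rw [h]; decide)) (P₁ := P₁) (P₂ := P₂)
    ((Walk.isPath_def _).2 (by decide)) ((Walk.isPath_def _).2 (by decide)) (by decide) ?_ ?_ <;>
  · unfold IsPartneredOff
    rw [h]
    decide +kernel

end Heawood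

/-- every conformal cycle of the Heawood graph has a conformal cross. -/
theorem statement_6 {c : ZMod 14} (C : heawood.Walk c c) (hC : C.IsCycle)
    (hconf : ConformalCycle heawood C) :
    HasConformalCross heawood C := by
  obtain ⟨φ, hφ⟩ := exists_iso_map_take_support hC
  have hφC : (C.map φ.toHom).IsCycle := hC.map φ.injective
  have hprefix : (C.map φ.toHom).support.take 5 = [0, 1, 2, 3, 4] := by
    simpa [List.map_take] using hφ
  refine .of_map φ ?_
  rcases support_cases_of_take_support hφC hprefix with h | h | h
  · exact absurd (hconf.map φ) (not_conformalCycle_of_mem_nonconformalSupports h)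
  · exact hasConformalCross_of_mem_chordCrossedSupports h
  · exact hasConformalCross_of_support_eq_hexagon h

end Paper
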